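/- arXiv:math/0207246 — 3 statements merged into one kernel-verified Lean document; each statement's English description precedes it below -/
import Mathlib

section
/- If G is a group of order 60 with more than one Sylow 5-subgroup, then G is isomorphic to the alternating group A5. -/
/-!
Let `G` have order 60 and more than one, hence six, Sylow 5-subgroups. A proper normal subgroup of
index prime to 5 would have a unique Sylow 5-subgroup, and `G` would inherit it, so there is none.
Consider the conjugation action on the Sylow 5-subgroups. Its kernel lies in a Sylow normalizer, of
order 10, and by the above its index is divisible by 5, so its order is 1 or 2; order 2 is
impossible since a group of order 30 has a normal Sylow 5-subgroup. The sign of the action is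
trivial, so `G` embeds into `A₆` as a subgroup of index 6. The coset action of the simple group `A₆`
on `A₆ ⧸ G` is faithful, and `G` is the stabilizer of one of the six cosets, so `G` acts faithfully
on the other five. Its image has index 2 in `S₅`, so it is `A₅`.
-/

open Equiv (Perm)
open Function (Injective)

section UniqueSylow

variable {G : Type*} [Group G] [Finite G] {p : ℕ} [Fact p.Prime] {m : ℕ}

theorem card_sylow_dvd_of_card_eq_mul (hG : Nat.card G = p * m) : Nat.card (Sylow p G) ∣ m := by
  obtain ⟨P⟩ : Nonempty (Sylow p G) := inferInstance
  have hdvd : Nat.card (Sylow p G) ∣ p * m := hG ▸ P.card_dvd_index.trans P.index_dvd_card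
  have hcop : (Nat.card (Sylow p G)).Coprime p :=
    ((Nat.Prime.coprime_iff_not_dvd Fact.out).mpr (not_dvd_card_sylow p G)).symm
  exact hcop.dvd_of_dvd_mul_left hdvd

theorem subsingleton_sylow_of_card_eq_mul (hG : Nat.card G = p * m) (hm : m ≤ p) :
    Subsingleton (Sylow p G) := by
  have hm0 : 0 < m := Nat.pos_of_mul_pos_left (hG ▸ Nat.card_pos)
  have hle : Nat.card (Sylow p G) ≤ p :=
    (Nat.le_of_dvd hm0 (card_sylow_dvd_of_card_eq_mul hG)).trans hm
  have hdvd : p ∣ Nat.card (Sylow p G) - 1 :=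
    (Nat.modEq_iff_dvd' Nat.card_pos).mp (card_sylow_modEq_one p G).symm
  have hlt : Nat.card (Sylow p G) - 1 < p := by
    have := (Fact.out : p.Prime).pos
    omega
  have := Nat.eq_zero_of_dvd_of_lt hdvd hlt
  exact (Finite.card_le_one_iff_subsingleton).mp (by omega)

theorem subsingleton_sylow_of_normal (N : Subgroup G) [N.Normal] [Subsingleton (Sylow p N)]
    (hN : ¬ p ∣ N.index) : Subsingleton (Sylow p G) := by
  obtain ⟨S⟩ : Nonempty (Sylow p N) := inferInstance
  let T : Subgroup G := (S : Subgroup N).map N.subtype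
  have hT : T.index = (S : Subgroup N).index * N.index :=
    Subgroup.index_map_subtype (S : Subgroup N)
  have hpT : ¬ p ∣ T.index := by
    rw [hT, Nat.Prime.dvd_mul Fact.out]
    exact not_or.mpr ⟨S.not_dvd_index, hN⟩
  have := Sylow.unique_of_normal ((S.isPGroup'.map N.subtype).toSylow hpT)
    (inferInstanceAs T.Normal)
  infer_instance

theorem exists_normal_card_eq_of_card_eq_two_mul (hG : Nat.card G = 2 * m) (hm : Odd m) :
    ∃ N : Subgroup G, N.Normal ∧ Nat.card N = m := by
  obtain ⟨P⟩ : Nonempty (Sylow 2 G) := inferInstance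
  have hP : Nat.card P = 2 := by
    rw [P.card_eq_multiplicity, hG, Nat.factorization_mul two_ne_zero hm.pos.ne']
    simp [Nat.prime_two.factorization_self,
      Nat.factorization_eq_zero_of_not_dvd hm.not_two_dvd_nat]
  have hcyc : IsCyclic P := isCyclic_of_prime_card hP
  have hmin : (Nat.card G).minFac = 2 := (Nat.minFac_eq_two_iff _).mpr ⟨m, hG⟩
  let N := (MonoidHom.transferSylow P (hcyc.normalizer_le_centralizer hmin)).ker
  have hN : Nat.card N * Nat.card P = Nat.card G := (hcyc.isComplement' hmin).card_mul_card
  exact ⟨N, inferInstance, by rw [hP, hG] at hN; omega⟩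

theorem subsingleton_sylow_of_card_eq_two_mul (hG : Nat.card G = 2 * (p * m)) (hp : Odd p)
    (hm : Odd m) (hmp : m ≤ p) : Subsingleton (Sylow p G) := by
  obtain ⟨N, hN, hcard⟩ := exists_normal_card_eq_of_card_eq_two_mul hG (hp.mul hm)
  have hindex : N.index = 2 := by
    have := N.index_mul_card
    rw [hcard, hG] at this
    exact Nat.eq_of_mul_eq_mul_right (hp.mul hm).pos this
  have := subsingleton_sylow_of_card_eq_mul hcard hmp
  refine subsingleton_sylow_of_normal N fun hdvd => ?_
  rw [hindex, Nat.prime_dvd_prime_iff_eq Fact.out Nat.prime_two] at hdvd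
  exact absurd (hdvd ▸ hp) (by decide)

end UniqueSylow

section SimpleGroup

variable {G X : Type*} [Group G]

theorem faithfulSMul_ofStabilizer [MulAction G X] [FaithfulSMul G X] (a : X) :
    FaithfulSMul (MulAction.stabilizer G a) (SubMulAction.ofStabilizer G a) where
  eq_of_smul_eq_smul {g h} hgh := by
    refine Subtype.ext (FaithfulSMul.eq_of_smul_eq_smul fun x : X => ?_)
    by_cases hx : x = a
    · rw [hx]
      exact g.2.trans h.2.symm
    · exact congrArg Subtype.val (hgh ⟨x, hx⟩)

theorem exists_injective_perm_stabilizer [MulAction G X] [FaithfulSMul G X] {n : ℕ}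
    (hX : Nat.card X = n + 1) (a : X) :
    ∃ f : MulAction.stabilizer G a →* Perm (Fin n), Injective f := by
  have : Finite X := Nat.finite_of_card_ne_zero (hX.trans_ne n.succ_ne_zero)
  have := faithfulSMul_ofStabilizer (G := G) a
  have hcard : Nat.card (SubMulAction.ofStabilizer G a) = n := by
    rw [SubMulAction.nat_card_ofStabilizer_eq, hX, Nat.add_sub_cancel]
  let e : Perm (SubMulAction.ofStabilizer G a) ≃* Perm (Fin n) :=
    (Finite.equivFinOfCardEq hcard).permCongrHom
  exact ⟨e.toMonoidHom.comp (MulAction.toPermHom _ _),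
    e.injective.comp MulAction.toPerm_injective⟩

theorem faithfulSMul_quotient_of_ne_top [IsSimpleGroup G] {H : Subgroup G} (hH : H ≠ ⊤) :
    FaithfulSMul G (G ⧸ H) := by
  have hcore : H.normalCore = ⊥ := (H.normalCore_normal.eq_bot_or_eq_top).resolve_right
    fun h => hH (top_le_iff.mp (h ▸ H.normalCore_le))
  rw [Subgroup.normalCore_eq_ker, MonoidHom.ker_eq_bot_iff] at hcore
  exact ⟨fun h => hcore (Equiv.ext h)⟩

theorem exists_injective_perm_of_index_eq_add_one [IsSimpleGroup G] {H : Subgroup G} {n : ℕ}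
    (hn : H.index = n + 1) (hH : H ≠ ⊤) : ∃ f : H →* Perm (Fin n), Injective f := by
  have := faithfulSMul_quotient_of_ne_top hH
  obtain ⟨f, hf⟩ := exists_injective_perm_stabilizer (G := G) hn ((1 : G) : G ⧸ H)
  let i : H ≃* MulAction.stabilizer G ((1 : G) : G ⧸ H) :=
    MulEquiv.subgroupCongr (MulAction.stabilizer_quotient H).symm
  exact ⟨f.comp i.toMonoidHom, hf.comp i.injective⟩

end SimpleGroup

theorem nonempty_mulEquiv_alternatingGroup_of_injective {G α : Type*} [Group G] [Fintype α]
    [DecidableEq α] (hG : 2 * Nat.card G = (Nat.card α).factorial) {f : G →* Perm α}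
    (hf : Injective f) : Nonempty (G ≃* alternatingGroup α) := by
  have hcard : Nat.card f.range = Nat.card G :=
    (Nat.card_congr (MonoidHom.ofInjective hf).toEquiv).symm
  have hindex : f.range.index = 2 := by
    have := f.range.index_mul_card
    rw [Nat.card_perm, ← hG, hcard] at this
    refine Nat.eq_of_mul_eq_mul_right (Nat.pos_of_ne_zero fun h0 => ?_) this
    exact (Nat.card α).factorial_ne_zero (by rw [← hG, h0])
  exact ⟨(MonoidHom.ofInjective hf).trans
    (MulEquiv.subgroupCongr (Equiv.Perm.eq_alternatingGroup_of_index_eq_two hindex))⟩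

section OrderSixty

local instance factPrimeFive : Fact (Nat.Prime 5) := ⟨Nat.prime_five⟩

variable {G : Type*} [Group G] [Finite G] [Nontrivial (Sylow 5 G)]

theorem card_sylow_five_eq_six (hG : Nat.card G = 60) : Nat.card (Sylow 5 G) = 6 := by
  have hdvd : Nat.card (Sylow 5 G) ∣ 12 := card_sylow_dvd_of_card_eq_mul hG
  have hmod : Nat.card (Sylow 5 G) % 5 = 1 := card_sylow_modEq_one 5 G
  have hone : 1 < Nat.card (Sylow 5 G) := Finite.one_lt_card
  have hle := Nat.le_of_dvd (by norm_num) hdvd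
  interval_cases Nat.card (Sylow 5 G) <;> omega

theorem eq_top_of_normal_of_not_five_dvd_index (hG : Nat.card G = 60) (N : Subgroup G) [N.Normal]
    (hN : ¬ 5 ∣ N.index) : N = ⊤ := by
  by_contra hne
  have hmul : N.index * Nat.card N = 60 := hG ▸ N.index_mul_card
  obtain ⟨m, hm⟩ : 5 ∣ Nat.card N := by
    refine (Nat.prime_five.dvd_mul.mp ?_).resolve_left hN
    rw [hmul]
    norm_num
  have hindex : N.index ≠ 1 := fun h => hne (Subgroup.index_eq_one.mp h)
  have hm12 : N.index * m = 12 := by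
    rw [hm] at hmul
    linarith
  have : Subsingleton (Sylow 5 N) := by
    rcases le_or_gt m 5 with hle | hlt
    · exact subsingleton_sylow_of_card_eq_mul hm hle
    · have hm6 : m = 6 := by
        have : N.index ≠ 0 := Subgroup.index_ne_zero_of_finite
        have : 2 ≤ N.index := by omega
        nlinarith
      exact subsingleton_sylow_of_card_eq_two_mul (m := 3) (by rw [hm, hm6]) (by decide)
        (by decide) (by norm_num)
  exact not_subsingleton (Sylow 5 G) (subsingleton_sylow_of_normal N hN)

theorem monoidHom_eq_one_of_not_five_dvd_card (hG : Nat.card G = 60) {H : Type*} [Group H]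
    (hH : ¬ 5 ∣ Nat.card H) (f : G →* H) : f = 1 := by
  rw [← MonoidHom.ker_eq_top_iff]
  refine eq_top_of_normal_of_not_five_dvd_index hG f.ker fun h => hH (h.trans ?_)
  rw [Subgroup.index_ker]
  exact f.range.card_subgroup_dvd_card

theorem isPGroup_quotient_of_subsingleton_sylow (hG : Nat.card G = 60) (N : Subgroup G) [N.Normal]
    [Subsingleton (Sylow 5 (G ⧸ N))] : IsPGroup 5 (G ⧸ N) := by
  obtain ⟨P⟩ : Nonempty (Sylow 5 (G ⧸ N)) := inferInstance
  have : (P : Subgroup (G ⧸ N)).Normal := P.normal_of_subsingleton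
  have hindex := (P : Subgroup (G ⧸ N)).index_comap_of_surjective (QuotientGroup.mk'_surjective N)
  have htop := eq_top_of_normal_of_not_five_dvd_index hG
    ((P : Subgroup (G ⧸ N)).comap (QuotientGroup.mk' N)) (hindex ▸ P.not_dvd_index)
  rw [htop, Subgroup.index_top, eq_comm, Subgroup.index_eq_one] at hindex
  have hP : IsPGroup 5 (P : Subgroup (G ⧸ N)) := P.isPGroup'
  rw [hindex] at hP
  exact hP.of_equiv Subgroup.topEquiv

theorem card_normalizer_sylow_five (hG : Nat.card G = 60) (P : Sylow 5 G) :
    Nat.card (Subgroup.normalizer (P : Set G)) = 10 := by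
  have := (Subgroup.normalizer (P : Set G)).card_mul_index
  rw [← P.card_eq_index_normalizer, card_sylow_five_eq_six hG, hG] at this
  omega

theorem card_ker_toPermHom_sylow_five_dvd (hG : Nat.card G = 60) :
    Nat.card (MulAction.toPermHom G (Sylow 5 G)).ker ∣ 10 := by
  obtain ⟨P⟩ : Nonempty (Sylow 5 G) := inferInstance
  rw [← card_normalizer_sylow_five hG P]
  refine Subgroup.card_dvd_of_le fun g hg => ?_
  exact Sylow.smul_eq_iff_mem_normalizer.mp (DFunLike.congr_fun (MonoidHom.mem_ker.mp hg) P)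

theorem card_ne_two_of_normal (hG : Nat.card G = 60) (N : Subgroup G) [N.Normal] :
    Nat.card N ≠ 2 := by
  intro hN
  have hquot : Nat.card (G ⧸ N) = 30 := by
    have := N.index_mul_card
    rw [Subgroup.index_eq_card, hN, hG] at this
    omega
  have : Subsingleton (Sylow 5 (G ⧸ N)) :=
    subsingleton_sylow_of_card_eq_two_mul (m := 3) hquot (by decide) (by decide) (by norm_num)
  obtain ⟨k, hk⟩ := IsPGroup.iff_card.mp (isPGroup_quotient_of_subsingleton_sylow hG N)
  have heven : 2 ∣ 5 ^ k := by
    rw [← hk, hquot]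
    norm_num
  exact absurd (Nat.prime_two.dvd_of_dvd_pow heven) (by norm_num)

theorem toPermHom_sylow_five_injective (hG : Nat.card G = 60) :
    Injective (MulAction.toPermHom G (Sylow 5 G)) := by
  rw [← MonoidHom.ker_eq_bot_iff]
  set K := (MulAction.toPermHom G (Sylow 5 G)).ker
  have hdvd : Nat.card K ∣ 10 := card_ker_toPermHom_sylow_five_dvd hG
  have hle : Nat.card K ≤ 10 := Nat.le_of_dvd (by norm_num) hdvd
  have hmul : K.index * Nat.card K = 60 := hG ▸ K.index_mul_card
  have hindex : 5 ∣ K.index := by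
    by_contra h
    have := eq_top_of_normal_of_not_five_dvd_index hG K h
    rw [this, Subgroup.card_top, hG] at hle
    omega
  have htwo : Nat.card K ≠ 2 := card_ne_two_of_normal hG K
  refine Subgroup.card_eq_one.mp ?_
  obtain ⟨j, hj⟩ := hindex
  rw [hj] at hmul
  interval_cases Nat.card K <;> omega

theorem exists_injective_alternatingGroup_six (hG : Nat.card G = 60) :
    ∃ f : G →* alternatingGroup (Fin 6), Injective f := by
  let e : Perm (Sylow 5 G) ≃* Perm (Fin 6) :=
    (Finite.equivFinOfCardEq (card_sylow_five_eq_six hG)).permCongrHom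
  let f : G →* Perm (Fin 6) := e.toMonoidHom.comp (MulAction.toPermHom G (Sylow 5 G))
  have hf : Injective f := e.injective.comp (toPermHom_sylow_five_injective hG)
  have hsign : Perm.sign.comp f = 1 := monoidHom_eq_one_of_not_five_dvd_card hG (by simp) _
  have heven (g : G) : f g ∈ alternatingGroup (Fin 6) :=
    Perm.mem_alternatingGroup.mpr (DFunLike.congr_fun hsign g)
  exact ⟨f.codRestrict _ heven, fun _ _ h => hf (congrArg Subtype.val h)⟩

theorem exists_injective_perm_five (hG : Nat.card G = 60) :
    ∃ f : G →* Perm (Fin 5), Injective f := by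
  obtain ⟨f, hf⟩ := exists_injective_alternatingGroup_six hG
  let i : G ≃* f.range := MonoidHom.ofInjective hf
  have hindex : f.range.index = 6 := by
    have := f.range.index_mul_card
    rw [← Nat.card_congr i.toEquiv, hG, nat_card_alternatingGroup, Nat.card_fin,
      show Nat.factorial 6 / 2 = 6 * 60 from rfl] at this
    omega
  have hne : f.range ≠ ⊤ := fun h => by simp [h] at hindex
  have : IsSimpleGroup (alternatingGroup (Fin 6)) := alternatingGroup.isSimpleGroup (by simp)
  obtain ⟨F, hF⟩ := exists_injective_perm_of_index_eq_add_one hindex hne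
  exact ⟨F.comp i.toMonoidHom, hF.comp i.injective⟩

end OrderSixty

theorem order_60_multiple_sylow5_iso_A5 (G : Type*) [Group G] [Fintype G]
    (hG : Fintype.card G = 60) (hSyl : 1 < Nat.card (Sylow 5 G)) :
    Nonempty (G ≃* alternatingGroup (Fin 5)) := by
  have hcard : Nat.card G = 60 := Nat.card_eq_fintype_card.trans hG
  have : Nontrivial (Sylow 5 G) := Finite.one_lt_card_iff_nontrivial.mp hSyl
  obtain ⟨f, hf⟩ := exists_injective_perm_five hcard
  refine nonempty_mulEquiv_alternatingGroup_of_injective ?_ hf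
  rw [hcard, Nat.card_fin]
  rfl
end

section
/- There is no finite group G of order 72 containing subgroups U ≅ D3 and V ≅ D2 with U ∩ V ≅ Z/2Z such that U and V generate G. -/
/-!
Let `π` be a quotient map of `G`. If `π` kills the rotations of `U`, then `π U` is generated by the
image of the involution shared with `V`, so `π G = π V`. If `π` is injective on `U` but not on `V`,
then likewise `π V ≤ π U = π G`. Hence a quotient of `G` has order 1, 2, 4 or 6 unless its order is
divisible by 12. On the other hand, every group of order 72 has a quotient of order 3, 8 or 18: if
a Sylow 3-subgroup is normal, its quotient has order 8; otherwise conjugation on the four Sylow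
3-subgroups maps the group onto `A₄`, which has a quotient of order 3, or onto `S₄` with a kernel
`K` of order 3. In the last case the automorphism group of `K` is abelian and the Klein four-group
consists of commutators, so its preimage centralizes `K`, is nilpotent, and has a Sylow 2-subgroup
of order 4 that is normal in the whole group.
-/

open Subgroup Equiv

section DihedralGroup

variable {p : ℕ}

theorem dihedralGroup_eq_top_of_odd_index {N : Subgroup (DihedralGroup p)} [N.Normal]
    (hN : Odd N.index) : N = ⊤ := by
  have hsr (i : ZMod p) : .sr i ∈ N := by
    obtain ⟨k, hk⟩ := hN
    have hpow := N.pow_index_mem (.sr i)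
    rwa [hk, pow_succ, pow_mul, sq, DihedralGroup.sr_mul_self, one_pow, one_mul] at hpow
  refine eq_top_iff.mpr fun g _ ↦ ?_
  cases g with
  | r i => simpa using mul_mem (hsr 0) (hsr i)
  | sr i => exact hsr i

theorem index_normal_dihedralGroup [Fact p.Prime] (N : Subgroup (DihedralGroup p)) [N.Normal] :
    N.index = 1 ∨ N.index = 2 ∨ N.index = 2 * p := by
  have hdvd : N.index ∣ 2 * p := DihedralGroup.nat_card (n := p) ▸ N.index_dvd_card
  rcases N.index.even_or_odd with heven | hodd
  · obtain ⟨k, hk⟩ := heven.two_dvd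
    rw [hk, Nat.mul_dvd_mul_iff_left two_pos, Nat.dvd_prime Fact.out] at hdvd
    rcases hdvd with rfl | rfl <;> simp [hk]
  · exact .inl (index_eq_one.mpr (dihedralGroup_eq_top_of_odd_index hodd))

theorem relIndex_of_mulEquiv_dihedralGroup [Fact p.Prime] {G : Type*} [Group G] {U : Subgroup G}
    (e : U ≃* DihedralGroup p) (N : Subgroup G) [N.Normal] :
    N.relIndex U = 1 ∨ N.relIndex U = 2 ∨ N.relIndex U = 2 * p := by
  have hnormal : ((N.subgroupOf U).map (e : U →* DihedralGroup p)).Normal :=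
    Normal.map inferInstance _ e.surjective
  rw [relIndex, ← index_map_equiv _ e]
  exact index_normal_dihedralGroup _

end DihedralGroup

section Amalgam

variable {G : Type*} [Group G]

theorem card_inf_mul_relIndex (N U : Subgroup G) :
    Nat.card ↥(N ⊓ U) * N.relIndex U = Nat.card U := by
  simpa only [relIndex_bot_left, inf_relIndex_right] using
    relIndex_mul_relIndex ⊥ (N ⊓ U) U bot_le inf_le_right

theorem inf_eq_bot_of_relIndex_eq_card {N U : Subgroup G} [Finite U]
    (h : N.relIndex U = Nat.card U) : N ⊓ U = ⊥ :=
  card_eq_one.mp <| (mul_eq_right₀ Nat.card_pos.ne').mp (h ▸ card_inf_mul_relIndex N U)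

variable {N U V : Subgroup G} [N.Normal]

theorem index_eq_relIndex_of_sup_eq_top (h : N ⊔ U = ⊤) : N.index = N.relIndex U := by
  rw [← relIndex_top_right, ← h, relIndex_sup_left]

theorem sup_eq_top_of_prime_relIndex (hgen : U ⊔ V = ⊤) (hU : (N.relIndex U).Prime)
    (hUV : ¬ U ⊓ V ≤ N) : N ⊔ V = ⊤ := by
  set W := U ⊓ V
  have hmul : N.relIndex W * (N ⊔ W).relIndex (N ⊔ U) = N.relIndex U := by
    simpa only [relIndex_sup_left] using
      relIndex_mul_relIndex N (N ⊔ W) (N ⊔ U) le_sup_left (sup_le_sup_left inf_le_left N)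
  have hone : (N ⊔ W).relIndex (N ⊔ U) = 1 :=
    (Nat.prime_mul_iff.mp (hmul ▸ hU)).elim (·.2) fun h ↦ absurd (relIndex_eq_one.mp h.2) hUV
  have hUNW : U ≤ N ⊔ W := le_sup_right.trans (relIndex_eq_one.mp hone)
  rw [eq_top_iff, ← hgen]
  exact sup_le (hUNW.trans (sup_le_sup_left inf_le_right N)) le_sup_right

theorem sup_eq_top_of_inf_eq_bot {q : ℕ} (hq : q.Prime) (hV : Nat.card V = q ^ 2)
    (hgen : U ⊔ V = ⊤) (hUV : U ⊓ V ≠ ⊥) (hNU : N ⊓ U = ⊥) (hN : N.relIndex V ≠ q ^ 2) :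
    N ⊔ U = ⊤ := by
  have hUVN : ¬ U ⊓ V ≤ N := fun h ↦ hUV (eq_bot_mono (le_inf h inf_le_left) hNU)
  have hone : N.relIndex V ≠ 1 := fun h ↦ hUVN (inf_le_right.trans (relIndex_eq_one.mp h))
  have hdvd : N.relIndex V ∣ q ^ 2 := hV ▸ N.relIndex_dvd_card V
  obtain ⟨k, hk, hk'⟩ := (Nat.dvd_prime_pow hq).mp hdvd
  have hprime : N.relIndex V = q := by interval_cases k <;> simp_all
  rw [sup_comm] at hgen
  rw [inf_comm] at hUVN
  exact sup_eq_top_of_prime_relIndex hgen (hprime ▸ hq) hUVN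

variable {p : ℕ} [Fact p.Prime]

theorem sup_eq_top_of_relIndex_ne (e : U ≃* DihedralGroup p) (hV : p.Coprime (Nat.card V))
    (hgen : U ⊔ V = ⊤) (hUV : U ⊓ V ≠ ⊥) (hN : N.relIndex U ≠ 2 * p) : N ⊔ V = ⊤ := by
  rcases relIndex_of_mulEquiv_dihedralGroup e N with hone | htwo | h
  · exact top_le_iff.mp (hgen ▸ sup_le_sup_right (relIndex_eq_one.mp hone) V)
  · have hcard : Nat.card ↥(N ⊓ U) = p := by
      have hmul := card_inf_mul_relIndex N U
      rw [htwo, Nat.card_congr e.toEquiv, DihedralGroup.nat_card, mul_comm] at hmul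
      exact Nat.eq_of_mul_eq_mul_left two_pos hmul
    have hUVN : ¬ U ⊓ V ≤ N := fun h ↦ hUV <| card_eq_one.mp <|
      Nat.eq_one_of_dvd_coprimes hV
        (hcard ▸ card_dvd_of_le (le_inf h inf_le_left)) (card_dvd_of_le inf_le_right)
    exact sup_eq_top_of_prime_relIndex hgen (htwo ▸ Nat.prime_two) hUVN
  · exact absurd h hN

theorem index_normal_of_dihedralGroup_sup (hp : Odd p) (e : U ≃* DihedralGroup p)
    (hV : Nat.card V = 4) (hgen : U ⊔ V = ⊤) (hUV : U ⊓ V ≠ ⊥) (N : Subgroup G) [N.Normal] :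
    N.index ∣ 4 ∨ N.index = 2 * p ∨ 4 * p ∣ N.index := by
  have hcop : p.Coprime 4 := hp.coprime_two_right.pow_right 2
  by_cases hU : N.relIndex U = 2 * p
  · by_cases hNV : N.relIndex V = 4
    · have h2p : 2 * p ∣ N.index := hU ▸ N.relIndex_dvd_index_of_normal U
      have h4 : 4 ∣ N.index := hNV ▸ N.relIndex_dvd_index_of_normal V
      exact .inr (.inr (hcop.symm.mul_dvd_of_dvd_of_dvd h4 (dvd_of_mul_left_dvd h2p)))
    · have : Finite U := .of_equiv _ e.symm.toEquiv
      have hcard : Nat.card U = 2 * p := (Nat.card_congr e.toEquiv).trans DihedralGroup.nat_card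
      have hNU := inf_eq_bot_of_relIndex_eq_card (hU.trans hcard.symm)
      have hsup := sup_eq_top_of_inf_eq_bot Nat.prime_two hV hgen hUV hNU hNV
      exact .inr (.inl (hU ▸ index_eq_relIndex_of_sup_eq_top hsup))
  · have hsup := sup_eq_top_of_relIndex_ne e (hV ▸ hcop) hgen hUV hU
    exact .inl (index_eq_relIndex_of_sup_eq_top hsup ▸ hV ▸ N.relIndex_dvd_card V)

end Amalgam

section NormalNilpotent

variable {G : Type*} [Group G]

theorem commutator_le_centralizer_of_isCyclic (H : Subgroup G) [H.Normal] [IsCyclic H] :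
    commutator G ≤ centralizer H := by
  let := (IsCyclic.mulAutMulEquiv H).toMonoidHom.commGroupOfInjective
    (IsCyclic.mulAutMulEquiv H).injective
  refine (Abelianization.commutator_subset_ker (MulAut.conjNormal (H := H))).trans fun g hg ↦
    mem_centralizer_iff.mpr fun h hh ↦ ?_
  have hconj : g * h * g⁻¹ = h := by
    simpa using congrArg Subtype.val (DFunLike.congr_fun (MonoidHom.mem_ker.mp hg) ⟨h, hh⟩)
  exact (mul_inv_eq_iff_eq_mul.mp hconj).symm

theorem isNilpotent_comap_of_le_commutator {H : Type*} [Group H] {f : G →* H}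
    (hf : Function.Surjective f) [IsCyclic f.ker] {L : Subgroup H} [Group.IsNilpotent L]
    (hL : L ≤ commutator H) : Group.IsNilpotent (L.comap f) := by
  have hcent : L.comap f ≤ centralizer f.ker :=
    calc L.comap f ≤ (commutator H).comap f := comap_mono hL
      _ = commutator G ⊔ f.ker := by
        rw [← comap_map_eq, map_commutator_eq, f.range_eq_top.mpr hf, commutator_def]
      _ ≤ centralizer f.ker :=
        sup_le (commutator_le_centralizer_of_isCyclic f.ker) f.ker.le_centralizer
  refine Subgroup.isNilpotent_of_ker_le_center (f.subgroupComap L) fun k hk ↦ ?_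
  have hk' : (k : G) ∈ f.ker := congrArg Subtype.val hk
  exact mem_center_iff.mpr fun g ↦ Subtype.ext (mem_centralizer_iff.mp (hcent g.2) k hk').symm

theorem card_sylow_eq_pow_of_not_dvd {p n m : ℕ} [Fact p.Prime] (hG : Nat.card G = p ^ n * m)
    (hm : ¬ p ∣ m) (P : Sylow p G) : Nat.card P = p ^ n := by
  have hp : p.Prime := Fact.out
  have hm0 : m ≠ 0 := fun h ↦ hm (h ▸ dvd_zero p)
  have : Finite G :=
    Nat.finite_of_card_ne_zero (hG ▸ mul_ne_zero (pow_ne_zero n hp.ne_zero) hm0)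
  have hfact : (Nat.card G).factorization p = n := by
    rw [hG, Nat.factorization_mul_apply_of_coprime ((hp.coprime_iff_not_dvd.mpr hm).pow_left n),
      hp.factorization_pow, Finsupp.single_eq_same, Nat.factorization_eq_zero_of_not_dvd hm,
      add_zero]
  rw [P.card_eq_multiplicity, hfact]

theorem exists_normal_card_eq_pow_of_not_dvd {p n m : ℕ} [Fact p.Prime] (N : Subgroup G)
    [N.Normal] [Group.IsNilpotent N] (hN : Nat.card N = p ^ n * m) (hm : ¬ p ∣ m) :
    ∃ Q : Subgroup G, Q.Normal ∧ Nat.card Q = p ^ n := by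
  have hm0 : m ≠ 0 := fun h ↦ hm (h ▸ dvd_zero p)
  have : Finite N :=
    Nat.finite_of_card_ne_zero (hN ▸ mul_ne_zero (pow_ne_zero n (NeZero.ne p)) hm0)
  obtain ⟨P⟩ : Nonempty (Sylow p N) := inferInstance
  have hP : P.Characteristic := P.characteristic_of_normal inferInstance
  refine ⟨P.map N.subtype, inferInstance, ?_⟩
  rw [card_map_of_injective N.subtype_injective]
  exact card_sylow_eq_pow_of_not_dvd hN hm P

end NormalNilpotent

section SylowAction

variable {G : Type*} [Group G] [Finite G] (p : ℕ) [Fact p.Prime]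

theorem card_sylow_dvd_index_ker_toPermHom :
    Nat.card (Sylow p G) ∣ (MulAction.toPermHom G (Sylow p G)).ker.index := by
  obtain ⟨P⟩ : Nonempty (Sylow p G) := inferInstance
  rw [P.card_eq_index_normalizer]
  exact index_dvd_of_le fun g hg ↦
    Sylow.smul_eq_iff_mem_normalizer.mp (DFunLike.congr_fun (MonoidHom.mem_ker.mp hg) P)

theorem dvd_index_ker_toPermHom_sylow [Nontrivial (Sylow p G)] :
    p ∣ (MulAction.toPermHom G (Sylow p G)).ker.index := by
  set K := (MulAction.toPermHom G (Sylow p G)).ker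
  obtain ⟨P, Q, hPQ⟩ := exists_pair_ne (Sylow p G)
  have hPK : ¬ (P : Subgroup G) ≤ K := fun h ↦ hPQ <| Sylow.ext <| Eq.symm <|
    P.is_maximal' Q.isPGroup' <| P.isPGroup'.sylow_mem_fixedPoints_iff.mp fun g ↦
      DFunLike.congr_fun (MonoidHom.mem_ker.mp (h g.2)) Q
  obtain ⟨n, hn⟩ : ∃ n, K.relIndex P = p ^ n := P.isPGroup'.index (K.subgroupOf P)
  have hn0 : n ≠ 0 := by
    rintro rfl
    exact hPK (relIndex_eq_one.mp hn)
  exact (dvd_pow_self p hn0).trans (hn ▸ K.relIndex_dvd_index_of_normal P)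

end SylowAction

section KleinFour

variable {α : Type*} [Fintype α] [DecidableEq α]

variable (α) in
/-- The Klein four-group of a four-element set, as a subgroup of the full symmetric group rather
than of the alternating group. -/
def permKleinFour : Subgroup (Perm α) :=
  (alternatingGroup.kleinFour α).map (alternatingGroup α).subtype

theorem card_permKleinFour (hα : Nat.card α = 4) : Nat.card (permKleinFour α) = 4 := by
  rw [permKleinFour, card_map_of_injective (alternatingGroup α).subtype_injective,
    alternatingGroup.kleinFour_card_of_card_eq_four hα]

theorem normal_permKleinFour (hα : Nat.card α = 4) : (permKleinFour α).Normal := by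
  have := alternatingGroup.characteristic_kleinFour hα
  exact ConjAct.normal_of_characteristic_of_normal

theorem permKleinFour_le_commutator (hα : Nat.card α = 4) :
    permKleinFour α ≤ commutator (Perm α) := by
  rw [permKleinFour, alternatingGroup.kleinFour_eq_commutator hα, map_subtype_commutator]
  exact commutator_mono le_top le_top

theorem index_permKleinFour (hα : Nat.card α = 4) : (permKleinFour α).index = 6 := by
  have h := (permKleinFour α).card_mul_index
  rw [card_permKleinFour hα, Nat.card_perm, hα, show Nat.factorial 4 = 24 from rfl] at h
  lia

theorem relIndex_permKleinFour_alternatingGroup (hα : Nat.card α = 4) :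
    (permKleinFour α).relIndex (alternatingGroup α) = 3 := by
  have : Nontrivial α := Finite.one_lt_card_iff_nontrivial.mp (by lia)
  have h := relIndex_mul_index (map_subtype_le (alternatingGroup.kleinFour α))
  rw [← permKleinFour, index_permKleinFour hα, alternatingGroup.index_eq_two] at h
  lia

end KleinFour

section PermHom

variable {G α : Type*} [Group G] {f : G →* Perm α}

theorem exists_normal_index_eq_three_of_index_range (hα : Nat.card α = 4) (hf : f.range.index = 2) :
    ∃ N : Subgroup G, N.Normal ∧ N.index = 3 := by
  classical
  have : Finite α := Nat.finite_of_card_ne_zero (by lia)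
  have : Fintype α := Fintype.ofFinite α
  have := normal_permKleinFour hα
  refine ⟨(permKleinFour α).comap f, inferInstance, ?_⟩
  rw [index_comap, Perm.eq_alternatingGroup_of_index_eq_two hf,
    relIndex_permKleinFour_alternatingGroup hα]

theorem exists_normal_card_eq_four_of_surjective (hα : Nat.card α = 4)
    (hf : Function.Surjective f) [IsCyclic f.ker] (hker : Odd (Nat.card f.ker)) :
    ∃ N : Subgroup G, N.Normal ∧ Nat.card N = 4 := by
  classical
  have : Finite α := Nat.finite_of_card_ne_zero (by lia)
  have : Fintype α := Fintype.ofFinite α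
  have := normal_permKleinFour hα
  have : Group.IsNilpotent (permKleinFour α) :=
    (IsPGroup.of_card (p := 2) (n := 2) (card_permKleinFour hα)).isNilpotent
  have hnil := isNilpotent_comap_of_le_commutator hf (permKleinFour_le_commutator hα)
  have hcard : Nat.card ((permKleinFour α).comap f) = 2 ^ 2 * Nat.card f.ker := by
    have hindex := ((permKleinFour α).comap f).card_mul_index
    rw [index_comap_of_surjective _ hf, index_permKleinFour hα, ← f.ker.card_mul_index,
      index_ker, f.range_eq_top.mpr hf, card_top, Nat.card_perm, hα,
      show Nat.factorial 4 = 24 from rfl] at hindex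
    lia
  exact exists_normal_card_eq_pow_of_not_dvd _ hcard hker.not_two_dvd_nat

end PermHom

section OrderSeventyTwo

variable {G : Type*} [Group G]

theorem index_sylow_three_of_card_eq_72 (hG : Nat.card G = 72) (P : Sylow 3 G) :
    (P : Subgroup G).index = 8 := by
  have hmul := (P : Subgroup G).card_mul_index
  rw [card_sylow_eq_pow_of_not_dvd (n := 2) (m := 8) hG (by norm_num) P, hG] at hmul
  lia

theorem card_sylow_three_of_card_eq_72 (hG : Nat.card G = 72) [Nontrivial (Sylow 3 G)] :
    Nat.card (Sylow 3 G) = 4 := by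
  have : Finite G := Nat.finite_of_card_ne_zero (by lia)
  obtain ⟨P⟩ : Nonempty (Sylow 3 G) := inferInstance
  have hdvd : Nat.card (Sylow 3 G) ∣ 8 := index_sylow_three_of_card_eq_72 hG P ▸ P.card_dvd_index
  have hmod : Nat.card (Sylow 3 G) % 3 = 1 := card_sylow_modEq_one 3 G
  have hone : 1 < Nat.card (Sylow 3 G) := Finite.one_lt_card
  have hle := Nat.le_of_dvd (by norm_num) hdvd
  interval_cases Nat.card (Sylow 3 G) <;> lia

theorem index_range_toPermHom_sylow_three (hG : Nat.card G = 72) [Nontrivial (Sylow 3 G)] :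
    (MulAction.toPermHom G (Sylow 3 G)).range.index = 1 ∨
      (MulAction.toPermHom G (Sylow 3 G)).range.index = 2 := by
  have : Finite G := Nat.finite_of_card_ne_zero (by lia)
  have hcard := card_sylow_three_of_card_eq_72 hG
  set f := MulAction.toPermHom G (Sylow 3 G)
  have h12 : 4 * 3 ∣ Nat.card f.range := index_ker f ▸ Nat.Coprime.mul_dvd_of_dvd_of_dvd
    (by norm_num) (hcard ▸ card_sylow_dvd_index_ker_toPermHom 3) (dvd_index_ker_toPermHom_sylow 3)
  obtain ⟨k, hk⟩ := h12
  have hmul := f.range.index_mul_card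
  rw [Nat.card_perm, hcard, show Nat.factorial 4 = 24 from rfl, hk] at hmul
  have hdvd : f.range.index ∣ 2 := ⟨k, by lia⟩
  exact (Nat.dvd_prime Nat.prime_two).mp hdvd

theorem exists_normal_index_eq_18_of_surjective {α : Type*} (hG : Nat.card G = 72)
    (hα : Nat.card α = 4) {f : G →* Perm α} (hf : Function.Surjective f) :
    ∃ N : Subgroup G, N.Normal ∧ N.index = 18 := by
  have : Finite α := Nat.finite_of_card_ne_zero (by lia)
  have hker : Nat.card f.ker = 3 := by
    have hmul := f.ker.card_mul_index
    rw [index_ker, f.range_eq_top.mpr hf, card_top, Nat.card_perm, hα, hG,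
      show Nat.factorial 4 = 24 from rfl] at hmul
    lia
  have : IsCyclic f.ker := isCyclic_of_prime_card hker
  obtain ⟨N, hN, hcard⟩ := exists_normal_card_eq_four_of_surjective hα hf (hker ▸ by decide)
  have hmul := N.card_mul_index
  rw [hcard, hG] at hmul
  exact ⟨N, hN, by lia⟩

theorem exists_normal_index_of_card_eq_72 (hG : Nat.card G = 72) :
    ∃ N : Subgroup G, N.Normal ∧ (N.index = 3 ∨ N.index = 8 ∨ N.index = 18) := by
  have : Finite G := Nat.finite_of_card_ne_zero (by lia)
  rcases subsingleton_or_nontrivial (Sylow 3 G) with _ | _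
  · obtain ⟨P⟩ : Nonempty (Sylow 3 G) := inferInstance
    exact ⟨P, P.normal_of_subsingleton, .inr (.inl (index_sylow_three_of_card_eq_72 hG P))⟩
  · have hcard := card_sylow_three_of_card_eq_72 hG
    rcases index_range_toPermHom_sylow_three hG with hone | htwo
    · have hf := MonoidHom.range_eq_top.mp (index_eq_one.mp hone)
      obtain ⟨N, hN, hindex⟩ := exists_normal_index_eq_18_of_surjective hG hcard hf
      exact ⟨N, hN, .inr (.inr hindex)⟩
    · obtain ⟨N, hN, hindex⟩ := exists_normal_index_eq_three_of_index_range hcard htwo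
      exact ⟨N, hN, .inl hindex⟩

theorem no_order_72_gen_by_D3_D2_general (hG : Nat.card G = 72) {U V : Subgroup G}
    (e : U ≃* DihedralGroup 3) (hV : Nat.card V = 4) (hUV : U ⊓ V ≠ ⊥) : U ⊔ V ≠ ⊤ := by
  intro hgen
  obtain ⟨N, hN, hindex⟩ := exists_normal_index_of_card_eq_72 hG
  rcases index_normal_of_dihedralGroup_sup (by decide) e hV hgen hUV N with h | h | h <;>
    rcases hindex with hi | hi | hi <;> norm_num [hi] at h

end OrderSeventyTwo

theorem no_order_72_gen_by_D3_D2 (G : Type*) [Group G] [Finite G]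
    (hG : Nat.card G = 72) (U V : Subgroup G)
    (hU : Nonempty (U ≃* DihedralGroup 3))
    (hV : Nonempty (V ≃* DihedralGroup 2))
    (hUV : Nonempty ((↥(U ⊓ V)) ≃* Multiplicative (ZMod 2))) :
    U ⊔ V ≠ ⊤ :=
  no_order_72_gen_by_D3_D2_general hG hU.some
    ((Nat.card_congr hV.some.toEquiv).trans DihedralGroup.nat_card)
    ((nontrivial_iff_ne_bot _).mp hUV.some.toEquiv.nontrivial)
end

section
/- If G is a finite group of order 48 containing subgroups U ≅ D3 and V ≅ D2 with U ∩ V ≅ Z/2Z generating G, then G ≅ S4 × Z/2Z. -/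
/-!
Both groups are the hyperoctahedral group `(ℤ/2)³ ⋊ S₃`.

The core `N` of a Sylow 2-subgroup of `G` has index dividing `3! = 6`. It meets `U` trivially,
because `U` has trivial center and so no nontrivial normal 2-subgroup; hence `|N| = 8`. As `4 ∤ 6`,
some involution `c` lies in `N ∩ V`, and `V = (U ∩ V)⟨c⟩`, so `G` is generated by `U` and `c`. Since
`c` commutes with `U ∩ V`, its conjugates under `U` are indexed by the three cosets `U / (U ∩ V)`,
which `U` permutes as the full symmetric group. Among three involutions of a group of order 8 two
commute, so by 2-transitivity all three conjugates of `c` commute. Thus `G` is a quotient of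
`(ℤ/2)³ ⋊ S₃`, and the orders agree.
-/

open Equiv Subgroup

section Hyperoctahedral

variable {ι G : Type*} [Group G]

/-- The hyperoctahedral group on `ι`: the signed permutations of `ι`, as the wreath product of `ℤ/2`
(written multiplicatively) with the symmetric group. -/
abbrev Hyperoctahedral (ι : Type*) : Type _ :=
  (ι → Multiplicative (ZMod 2)) ⋊[mulAutArrow] Perm ι

theorem card_hyperoctahedral (ι : Type*) [Finite ι] :
    Nat.card (Hyperoctahedral ι) = 2 ^ Nat.card ι * (Nat.card ι).factorial := by
  rw [SemidirectProduct.card, Nat.card_fun, Nat.card_perm,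
    Nat.card_congr Multiplicative.toAdd, Nat.card_zmod]

/-- Generators of `G` satisfying the relations of the hyperoctahedral group: permutations `φ σ` and
sign changes `t i` in the single coordinates `i`. They exhibit `G` as a quotient of
`Hyperoctahedral ι`. -/
structure IsHyperoctahedralSystem (φ : Perm ι →* G) (t : ι → G) : Prop where
  sq_eq_one (i : ι) : t i ^ 2 = 1
  commute : Pairwise fun i j ↦ Commute (t i) (t j)
  conj (σ : Perm ι) (i : ι) : φ σ * t i * (φ σ)⁻¹ = t (σ i)
  sup_eq_top : φ.range ⊔ closure (Set.range t) = ⊤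

/-- The homomorphism from the cyclic group of order `n` determined by an element `g` with
`g ^ n = 1`, sending the generator `ofAdd 1` to `g`. -/
def zmodPowersHom {n : ℕ} [NeZero n] (g : G) (hg : g ^ n = 1) :
    Multiplicative (ZMod n) →* G where
  toFun z := g ^ z.toAdd.val
  map_one' := by simp
  map_mul' y z := by rw [toAdd_mul, ZMod.val_add, ← pow_add, ← pow_eq_pow_mod _ hg]

theorem zmodPowersHom_ofAdd_one {n : ℕ} [NeZero n] (g : G) (hg : g ^ n = 1) :
    zmodPowersHom g hg (Multiplicative.ofAdd 1) = g := by
  simp [zmodPowersHom, ZMod.val_one_eq_one_mod, ← pow_eq_pow_mod _ hg]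

namespace IsHyperoctahedralSystem

variable {φ : Perm ι →* G} {t : ι → G}

theorem reindex {κ : Type*} (h : IsHyperoctahedralSystem φ t) (e : ι ≃ κ) :
    IsHyperoctahedralSystem (φ.comp e.symm.permCongrHom.toMonoidHom) (t ∘ e.symm) where
  sq_eq_one i := h.sq_eq_one _
  commute i j hij := h.commute (e.symm.injective.ne hij)
  conj σ i := by simp [h.conj]
  sup_eq_top := by
    rw [MonoidHom.range_comp,
      MonoidHom.range_eq_top_of_surjective _ e.symm.permCongrHom.surjective,
      ← MonoidHom.range_eq_map, e.symm.surjective.range_comp, h.sup_eq_top]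

variable [Finite ι]

theorem exists_surjective_hom (h : IsHyperoctahedralSystem φ t) :
    ∃ f : Hyperoctahedral ι →* G, Function.Surjective f := by
  classical
  have := Fintype.ofFinite ι
  let T : (ι → Multiplicative (ZMod 2)) →* G :=
    MonoidHom.noncommPiCoprod (fun i ↦ zmodPowersHom (t i) (h.sq_eq_one i))
      fun i j hij y z ↦ (h.commute hij).pow_pow _ _
  have hT (i : ι) (y) : T (Pi.mulSingle i y) = zmodPowersHom (t i) (h.sq_eq_one i) y :=
    MonoidHom.noncommPiCoprod_mulSingle ..
  have hconj (σ : Perm ι) :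
      T.comp (mulAutArrow σ).toMonoidHom = (MulAut.conj (φ σ)).toMonoidHom.comp T := by
    refine MonoidHom.pi_ext fun i y ↦ ?_
    have hσ : mulAutArrow σ (Pi.mulSingle i y) = Pi.mulSingle (σ i) y :=
      Pi.mulSingle_comp_equiv σ⁻¹ i y
    simp [hσ, hT, zmodPowersHom, ← h.conj]
  refine ⟨SemidirectProduct.lift T φ hconj, MonoidHom.range_eq_top.mp ?_⟩
  rw [eq_top_iff, ← h.sup_eq_top, sup_le_iff, closure_le]
  constructor
  · rintro _ ⟨σ, rfl⟩
    exact ⟨SemidirectProduct.inr σ, SemidirectProduct.lift_inr ..⟩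
  · rintro _ ⟨i, rfl⟩
    refine ⟨SemidirectProduct.inl (Pi.mulSingle i (Multiplicative.ofAdd 1)), ?_⟩
    rw [SemidirectProduct.lift_inl, hT, zmodPowersHom_ofAdd_one]

theorem nonempty_mulEquiv (h : IsHyperoctahedralSystem φ t)
    (hG : Nat.card G = 2 ^ Nat.card ι * (Nat.card ι).factorial) :
    Nonempty (Hyperoctahedral ι ≃* G) := by
  obtain ⟨f, hf⟩ := h.exists_surjective_hom
  have : Finite (Hyperoctahedral ι) :=
    Nat.finite_of_card_ne_zero (by rw [card_hyperoctahedral]; positivity)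
  exact ⟨.ofBijective f (hf.bijective_of_nat_card_le (by rw [card_hyperoctahedral, hG]))⟩

end IsHyperoctahedralSystem

end Hyperoctahedral

section Group

variable {G : Type*} [Group G]

theorem index_normalCore_dvd_factorial (H : Subgroup G) [H.FiniteIndex] :
    H.normalCore.index ∣ H.index.factorial := by
  rw [normalCore_eq_ker, index_ker, index, ← Nat.card_perm]
  exact card_subgroup_dvd_card _

theorem card_dvd_index_of_disjoint {N U : Subgroup G} [N.Normal] (h : Disjoint N U) :
    Nat.card U ∣ N.index := by
  rw [← relIndex_bot_left, ← h.eq_bot, inf_relIndex_right]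
  exact relIndex_dvd_index_of_normal N U

theorem le_center_of_normal_of_card_eq_two {K : Subgroup G} [hn : K.Normal]
    (hK : Nat.card K = 2) : K ≤ center G := by
  intro k hk
  obtain rfl | hk1 := eq_or_ne k 1
  · exact one_mem _
  rw [mem_center_iff]
  intro g
  obtain ⟨y, -, hy⟩ := (Nat.card_eq_two_iff' (1 : K)).mp hK
  have hconj : (⟨g * k * g⁻¹, hn.conj_mem k hk g⟩ : K) = ⟨k, hk⟩ :=
    (hy _ (by simpa [Subtype.ext_iff])).trans (hy _ (by simpa [Subtype.ext_iff])).symm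
  exact mul_inv_eq_iff_eq_mul.mp (congrArg Subtype.val hconj)

theorem eq_bot_of_normal_of_isPGroup_two {m : ℕ} (hm : Odd m) (hG : Nat.card G = 2 * m)
    (hZ : center G = ⊥) {K : Subgroup G} [K.Normal] (hK : IsPGroup 2 K) : K = ⊥ := by
  have : Finite G := Nat.finite_of_card_ne_zero (by have := hm.pos; omega)
  obtain ⟨n, hn⟩ := IsPGroup.iff_card.mp hK
  have hdvd : Nat.card K ∣ 2 := by
    rw [hn]
    refine (Nat.Coprime.pow_left n hm.coprime_two_left).dvd_of_dvd_mul_right ?_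
    rw [← hn, ← hG]
    exact card_subgroup_dvd_card K
  obtain h1 | h2 := (Nat.dvd_prime Nat.prime_two).mp hdvd
  · exact card_eq_one.mp h1
  · exact le_bot_iff.mp (hZ ▸ le_center_of_normal_of_card_eq_two h2)

theorem commute_of_sq_eq_one {c d : G} (hc : c ^ 2 = 1) (hd : d ^ 2 = 1) (hcd : (c * d) ^ 2 = 1) :
    Commute c d := by
  rw [sq, ← inv_eq_iff_mul_eq_one] at hc hd hcd
  rw [commute_iff_eq, ← hcd, mul_inv_rev, hc, hd]

theorem eq_mul_of_card_eq_four (hG : Nat.card G = 4) {x y z : G} (hx2 : x ^ 2 = 1) (hx : x ≠ 1)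
    (hy : y ≠ 1) (hxy : x ≠ y) (hz : z ≠ 1) (hzx : z ≠ x) (hzy : z ≠ y) : z = x * y := by
  by_contra hzxy
  have : Finite G := Nat.finite_of_card_ne_zero (by omega)
  have := Fintype.ofFinite G
  have hxy1 : x * y ≠ 1 := fun h ↦ hxy (mul_left_cancel ((sq x).symm.trans (hx2.trans h.symm)))
  have hnodup : [1, x, y, z, x * y].Nodup := by
    simp [*, eq_comm (a := (1 : G)), Ne.symm, eq_comm (b := z)]
  have := hnodup.length_le_card
  rw [← Nat.card_eq_fintype_card, hG] at this
  simp at this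

theorem exists_mem_center_orderOf_eq {p : ℕ} [Fact p.Prime] [Finite G] [Nontrivial G]
    (hG : IsPGroup p G) : ∃ z ∈ center G, orderOf z = p := by
  have := hG.center_nontrivial
  have hdvd := (hG.to_subgroup (center G)).card_eq_or_dvd.resolve_left Finite.one_lt_card.ne'
  obtain ⟨z, hz⟩ := exists_prime_orderOf_dvd_card' p hdvd
  exact ⟨z, z.2, by rwa [orderOf_coe]⟩

theorem normal_of_le_center {K : Subgroup G} (hK : K ≤ center G) : K.Normal :=
  ⟨fun k hk g ↦ by rwa [mem_center_iff.mp (hK hk) g, mul_inv_cancel_right]⟩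

theorem commute_or_commute_or_commute_of_card_eq_eight (hG : Nat.card G = 8) {c d e : G}
    (hc : c ^ 2 = 1) (hd : d ^ 2 = 1) (he : e ^ 2 = 1) :
    Commute c d ∨ Commute d e ∨ Commute c e := by
  have : Finite G := Nat.finite_of_card_ne_zero (by omega)
  have : Nontrivial G := Finite.one_lt_card_iff_nontrivial.mp (by omega)
  obtain ⟨z, hz, hz2⟩ := exists_mem_center_orderOf_eq
    (IsPGroup.of_card (p := 2) (n := 3) (by rw [hG]; norm_num))
  have := normal_of_le_center (zpowers_le.mpr hz)
  let π := QuotientGroup.mk' (zpowers z)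
  have hcard : Nat.card (G ⧸ zpowers z) = 4 := by
    have := (zpowers z).card_mul_index
    rw [Nat.card_zpowers, hz2, hG, index] at this
    omega
  have hfiber {x y : G} (h : π x = π y) : ∃ w ∈ center G, w ^ 2 = 1 ∧ y = x * w := by
    have hw := QuotientGroup.eq.mp h
    have hw2 := orderOf_dvd_iff_pow_eq_one.mp (hz2 ▸ orderOf_dvd_of_mem_zpowers hw)
    exact ⟨x⁻¹ * y, zpowers_le.mpr hz hw, hw2, (mul_inv_cancel_left x y).symm⟩
  have hcomm {x y g : G} (h : π x = π y) (hxg : Commute x g) : Commute y g := by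
    obtain ⟨w, hw, -, rfl⟩ := hfiber h
    exact hxg.mul_left (mem_center_iff.mp hw g).symm
  have hsq {x y : G} (h : π x = π y) : x ^ 2 = y ^ 2 := by
    obtain ⟨w, hw, hw2, rfl⟩ := hfiber h
    rw [Commute.mul_pow (mem_center_iff.mp hw x), hw2, mul_one]
  -- If no two commute, their images in the quotient are the three nontrivial elements, so that `e`
  -- agrees with `c * d` up to `z`, whence `(c * d) ^ 2 = 1` and `c`, `d` commute after all.
  by_contra! hne
  obtain ⟨hcd, hde, hce⟩ := hne
  have hone {x y : G} (hxy : ¬ Commute x y) : π x ≠ 1 := fun h ↦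
    hxy (hcomm (x := 1) (by rw [h, map_one]) (.one_left y))
  have hmul : π e = π (c * d) := by
    rw [map_mul]
    exact eq_mul_of_card_eq_four hcard (by rw [← map_pow, hc, map_one])
      (hone hcd) (hone (mt .symm hcd)) (fun h ↦ hcd (hcomm h (.refl c)).symm)
      (hone (mt .symm hde)) (fun h ↦ hce (hcomm h (.refl e))) (fun h ↦ hde (hcomm h (.refl e)))
  exact hcd (commute_of_sq_eq_one hc hd (by rw [← hsq hmul, he]))

section CosetConj

variable {U : Subgroup G} {W : Subgroup U} {c : G}

/-- The conjugates `u * c * u⁻¹` of `c` by elements of `U`, indexed by the cosets in `U` of a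
subgroup `W` that commutes with `c`. -/
def cosetConj (hc : ∀ w ∈ W, Commute (w : G) c) : U ⧸ W → G :=
  Quotient.lift (fun u : U ↦ u * c * (u : G)⁻¹) fun u v huv ↦ by
    obtain ⟨w, hw, rfl⟩ : ∃ w ∈ W, v = u * w :=
      ⟨_, QuotientGroup.leftRel_apply.mp huv, (mul_inv_cancel_left u v).symm⟩
    simp only [coe_mul, mul_inv_rev, mul_assoc, (hc w hw).eq, mul_inv_cancel_left]

theorem cosetConj_mk (hc : ∀ w ∈ W, Commute (w : G) c) (u : U) :
    cosetConj hc (u : U ⧸ W) = u * c * (u : G)⁻¹ := rfl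

theorem cosetConj_smul (hc : ∀ w ∈ W, Commute (w : G) c) (u : U) (q : U ⧸ W) :
    cosetConj hc (u • q) = u * cosetConj hc q * (u : G)⁻¹ := by
  induction q using QuotientGroup.induction_on with | H v =>
  simp only [MulAction.Quotient.smul_coe, cosetConj_mk, smul_eq_mul, coe_mul]
  group

end CosetConj

theorem pairwise_commute_of_exists_commute {ι : Type*} {φ : Perm ι →* G} {t : ι → G}
    (ht : ∀ σ i, φ σ * t i * (φ σ)⁻¹ = t (σ i)) (h : ∃ i j, i ≠ j ∧ Commute (t i) (t j)) :
    Pairwise fun i j ↦ Commute (t i) (t j) := by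
  obtain ⟨i, j, hij, hcomm⟩ := h
  intro k l hkl
  obtain ⟨σ, rfl, rfl⟩ := MulAction.is_two_pretransitive_iff.mp
    (Perm.isMultiplyPretransitive ι 2) hij hkl
  rw [Perm.smul_def, Perm.smul_def, ← ht, ← ht]
  exact (Commute.conj_iff _).mpr hcomm

theorem pairwise_commute_of_card_eq_eight {ι : Type*} (hι : Nat.card ι = 3)
    {N : Subgroup G} (hN : Nat.card N = 8)
    {φ : Perm ι →* G} {t : ι → G} (ht : ∀ σ i, φ σ * t i * (φ σ)⁻¹ = t (σ i))
    (htN : ∀ i, t i ∈ N) (hsq : ∀ i, t i ^ 2 = 1) : Pairwise fun i j ↦ Commute (t i) (t j) := by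
  have : Finite ι := Nat.finite_of_card_ne_zero (by omega)
  let e := (Finite.equivFinOfCardEq hι).symm
  let s (i : Fin 3) : N := ⟨t (e i), htN _⟩
  have hs (i) : s i ^ 2 = 1 := Subtype.ext (hsq _)
  have hs_comm {i j} (h : Commute (s i) (s j)) : Commute (t (e i)) (t (e j)) := h.map N.subtype
  apply pairwise_commute_of_exists_commute ht
  obtain h | h | h := commute_or_commute_or_commute_of_card_eq_eight hN (hs 0) (hs 1) (hs 2)
  · exact ⟨e 0, e 1, e.injective.ne (by decide), hs_comm h⟩
  · exact ⟨e 1, e 2, e.injective.ne (by decide), hs_comm h⟩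
  · exact ⟨e 0, e 2, e.injective.ne (by decide), hs_comm h⟩

theorem toPermHom_quotient_bijective {W : Subgroup G}
    (hcore : W.normalCore = ⊥) (hcard : Nat.card G = W.index.factorial) :
    Function.Bijective (MulAction.toPermHom G (G ⧸ W)) := by
  have : Finite G := Nat.finite_of_card_ne_zero (by rw [hcard]; positivity)
  refine Function.Injective.bijective_of_nat_card_le ?_ ?_
  · rw [← MonoidHom.ker_eq_bot_iff, ← normalCore_eq_ker, hcore]
  · rw [Nat.card_perm, ← index, hcard]

theorem exists_isHyperoctahedralSystem_of_sup_zpowers_eq_top {N U : Subgroup G} [N.Normal]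
    (hN : Nat.card N = 8) (hU : Nat.card U = 6)
    {W : Subgroup U} (hW : Nat.card W = 2) (hcore : W.normalCore = ⊥)
    {c : G} (hcN : c ∈ N) (hc : c ^ 2 = 1) (hWc : ∀ w ∈ W, Commute (w : G) c)
    (hgen : U ⊔ zpowers c = ⊤) :
    ∃ (φ : Perm (Fin 3) →* G) (t : Fin 3 → G), IsHyperoctahedralSystem φ t := by
  have hindex : W.index = 3 := by have := W.card_mul_index; grind
  have : W.FiniteIndex := ⟨by omega⟩
  let ρ := MulEquiv.ofBijective _
    (toPermHom_quotient_bijective hcore (by rw [hindex, hU]; rfl))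
  have hconj (σ : Perm (U ⧸ W)) (q : U ⧸ W) :
      (ρ.symm σ : G) * cosetConj hWc q * (ρ.symm σ : G)⁻¹ = cosetConj hWc (σ q) := by
    rw [← cosetConj_smul]
    exact congrArg (fun τ : Perm (U ⧸ W) ↦ cosetConj hWc (τ q)) (ρ.apply_symm_apply σ)
  have hmem (q : U ⧸ W) : cosetConj hWc q ∈ N := by
    induction q using QuotientGroup.induction_on with | H v =>
    exact Normal.conj_mem ‹_› c hcN v
  have hsq (q : U ⧸ W) : cosetConj hWc q ^ 2 = 1 := by
    induction q using QuotientGroup.induction_on with | H v =>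
    rw [cosetConj_mk, conj_pow, hc, mul_one, mul_inv_cancel]
  have hsys : IsHyperoctahedralSystem (U.subtype.comp ρ.symm.toMonoidHom) (cosetConj hWc) :=
    { sq_eq_one := hsq
      commute := pairwise_commute_of_card_eq_eight
        (φ := U.subtype.comp ρ.symm.toMonoidHom) hindex hN hconj hmem hsq
      conj := hconj
      sup_eq_top := by
        rw [eq_top_iff, ← hgen]
        apply sup_le_sup
        · rw [MonoidHom.range_comp, MonoidHom.range_eq_top_of_surjective _ ρ.symm.surjective,
            ← MonoidHom.range_eq_map, range_subtype]
        · exact zpowers_le.mpr (subset_closure ⟨(1 : U), by simp [cosetConj_mk]⟩) }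
  exact ⟨_, _, hsys.reindex (Finite.equivFinOfCardEq hindex)⟩

theorem exists_normal_card_eq_eight_disjoint (hG : Nat.card G = 48) {U : Subgroup G}
    (hU : Nat.card U = 6) (hZ : center U = ⊥) :
    ∃ N : Subgroup G, N.Normal ∧ Nat.card N = 8 ∧ Disjoint N U := by
  have : Finite G := Nat.finite_of_card_ne_zero (by omega)
  obtain ⟨P, hP⟩ := Sylow.exists_subgroup_card_pow_prime (G := G) (n := 4) 2
    (by rw [hG]; norm_num)
  have hPindex : P.index = 3 := by have := P.card_mul_index; grind
  have hdisj : Disjoint P.normalCore U := by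
    rw [← subgroupOf_eq_bot]
    exact eq_bot_of_normal_of_isPGroup_two (m := 3) (by decide) hU hZ
      ((IsPGroup.of_card hP).to_le P.normalCore_le).comap_subtype
  refine ⟨P.normalCore, inferInstance, ?_, hdisj⟩
  have hindex : P.normalCore.index = 6 := Nat.dvd_antisymm
    ((index_normalCore_dvd_factorial P).trans (by rw [hPindex]; decide))
    (hU ▸ card_dvd_index_of_disjoint hdisj)
  have := P.normalCore.card_mul_index
  grind

theorem exists_mem_inf_ne_one_of_not_dvd_index {N V : Subgroup G} [N.Normal]
    (h : ¬ Nat.card V ∣ N.index) : ∃ c ∈ N ⊓ V, c ≠ 1 := by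
  by_contra! hc
  exact h (card_dvd_index_of_disjoint (disjoint_iff.mpr ((eq_bot_iff_forall _).mpr hc)))

theorem sup_zpowers_eq_of_relIndex_prime {H V : Subgroup G} {c : G} (hHV : H ≤ V)
    (hp : (H.relIndex V).Prime) (hcV : c ∈ V) (hcH : c ∉ H) : H ⊔ zpowers c = V := by
  have hle : H ⊔ zpowers c ≤ V := sup_le hHV (zpowers_le.mpr hcV)
  have hmul := relIndex_mul_relIndex H (H ⊔ zpowers c) V le_sup_left hle
  obtain ⟨-, h⟩ | ⟨-, h⟩ := Nat.prime_mul_iff.mp (hmul ▸ hp)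
  · exact le_antisymm hle (relIndex_eq_one.mp h)
  · exact absurd (relIndex_eq_one.mp h (mem_sup_right (mem_zpowers c))) hcH

theorem exists_isHyperoctahedralSystem_of_sup_eq_top (hG : Nat.card G = 48)
    {U V : Subgroup G} (hU : Nat.card U = 6) (hZ : center U = ⊥) [IsKleinFour V]
    (hUV : Nat.card (U ⊓ V : Subgroup G) = 2) (hgen : U ⊔ V = ⊤) :
    ∃ (φ : Perm (Fin 3) →* G) (t : Fin 3 → G), IsHyperoctahedralSystem φ t := by
  obtain ⟨N, hN, hNcard, hNU⟩ := exists_normal_card_eq_eight_disjoint hG hU hZ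
  have hNindex : N.index = 6 := by have := N.card_mul_index; grind
  have hV : Nat.card V = 4 := IsKleinFour.card_four
  obtain ⟨c, ⟨hcN, hcV⟩, hc1⟩ := exists_mem_inf_ne_one_of_not_dvd_index (N := N) (V := V)
    (by rw [hNindex, hV]; decide)
  have hcU : c ∉ U := fun h ↦ hc1 (disjoint_def.mp hNU hcN h)
  have hV_eq : (U ⊓ V) ⊔ zpowers c = V := by
    refine sup_zpowers_eq_of_relIndex_prime inf_le_right ?_ hcV fun h ↦ hcU h.1
    have := relIndex_mul_relIndex ⊥ (U ⊓ V) V bot_le inf_le_right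
    rw [relIndex_bot_left, relIndex_bot_left, hUV, hV] at this
    rw [show (U ⊓ V).relIndex V = 2 by omega]
    exact Nat.prime_two
  have hWcard : Nat.card (V.subgroupOf U) = 2 := by
    rw [← inf_subgroupOf_left, Nat.card_congr (subgroupOfEquivOfLe inf_le_left).toEquiv, hUV]
  have hcore : (V.subgroupOf U).normalCore = ⊥ :=
    eq_bot_of_normal_of_isPGroup_two (m := 3) (by decide) hU hZ
      ((IsPGroup.of_card (n := 1) hWcard).to_le (normalCore_le _))
  refine exists_isHyperoctahedralSystem_of_sup_zpowers_eq_top hNcard hU hWcard hcore hcN ?_ ?_ ?_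
  · rw [sq]
    exact congrArg Subtype.val (IsKleinFour.mul_self (⟨c, hcV⟩ : V))
  · intro w hw
    exact congrArg Subtype.val
      (mul_comm_of_exponent_two IsKleinFour.exponent_two (⟨w, hw⟩ : V) ⟨c, hcV⟩)
  · rw [← hgen, ← hV_eq, ← sup_assoc, sup_inf_self]

end Group

/-- The permutation part of the hyperoctahedral system in `S₄ × ℤ/2`: `S₃` acts on `{1, 2, 3}` and
fixes `0`. -/
def s4Hom : Perm (Fin 3) →* Perm (Fin 4) × Multiplicative (ZMod 2) :=
  (MonoidHom.inl _ _).comp (Perm.extendDomainHom (finSuccAboveEquiv 0))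

/-- The sign changes of the hyperoctahedral system in `S₄ × ℤ/2`: the double transposition that
moves `0` to `i + 1`, paired with the generator of `ℤ/2`. Without the second component the product
of all three would be trivial. -/
def s4Refl : Fin 3 → Perm (Fin 4) × Multiplicative (ZMod 2) :=
  ![(swap 0 1 * swap 2 3, .ofAdd 1), (swap 0 2 * swap 1 3, .ofAdd 1),
    (swap 0 3 * swap 1 2, .ofAdd 1)]

theorem isHyperoctahedralSystem_s4 : IsHyperoctahedralSystem s4Hom s4Refl where
  sq_eq_one := by decide
  commute i j _ := by revert i j; unfold Commute SemiconjBy; decide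
  conj := by decide
  sup_eq_top := by
    set H := s4Hom.range ⊔ closure (Set.range s4Refl)
    have hφ (σ) : s4Hom σ ∈ H := mem_sup_left ⟨σ, rfl⟩
    have ht (i) : s4Refl i ∈ H := mem_sup_right (subset_closure ⟨i, rfl⟩)
    have hz : (1, .ofAdd 1) ∈ H := by
      have : (1, .ofAdd 1) = s4Refl 0 * s4Refl 1 * s4Refl 2 := by decide
      exact this ▸ mul_mem (mul_mem (ht 0) (ht 1)) (ht 2)
    have hswap (i : Fin 3) : (swap i.castSucc i.succ, 1) ∈ H := by
      fin_cases i
      · have : (swap 0 1, 1) = (1, .ofAdd 1) * s4Refl 0 * s4Hom (swap 1 2) := by decide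
        exact this ▸ mul_mem (mul_mem hz (ht 0)) (hφ _)
      · have : (swap 1 2, 1) = s4Hom (swap 0 1) := by decide
        exact this ▸ hφ _
      · have : (swap 2 3, 1) = s4Hom (swap 1 2) := by decide
        exact this ▸ hφ _
    have hinl (σ : Perm (Fin 4)) : (σ, 1) ∈ H := by
      have hle : Submonoid.closure (Set.range fun i : Fin 3 ↦ swap i.castSucc i.succ) ≤
          (H.comap (MonoidHom.inl _ _)).toSubmonoid :=
        Submonoid.closure_le.mpr (Set.range_subset_iff.mpr hswap)
      rw [Perm.mclosure_swap_castSucc_succ] at hle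
      exact hle (Submonoid.mem_top σ)
    rw [eq_top_iff]
    rintro ⟨σ, z⟩ -
    have hinr : (1, z) ∈ H := by
      obtain rfl | rfl : z = 1 ∨ z = .ofAdd 1 := by revert z; decide
      · exact one_mem H
      · exact hz
    simpa using mul_mem (hinl σ) hinr

theorem card_perm_four_prod : Nat.card (Perm (Fin 4) × Multiplicative (ZMod 2)) = 48 := by
  rw [Nat.card_prod, Nat.card_perm, Nat.card_fin, Nat.card_congr Multiplicative.toAdd,
    Nat.card_zmod]
  rfl

theorem order_48_gen_by_D3_D2_iso_S4_x_Z2 (G : Type*) [Group G] [Finite G]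
    (hG : Nat.card G = 48) (U V : Subgroup G)
    (hU : Nonempty (U ≃* DihedralGroup 3))
    (hV : Nonempty (V ≃* DihedralGroup 2))
    (hUV : Nonempty ((↥(U ⊓ V)) ≃* Multiplicative (ZMod 2)))
    (hgen : U ⊔ V = ⊤) :
    Nonempty (G ≃* Equiv.Perm (Fin 4) × Multiplicative (ZMod 2)) := by
  obtain ⟨eU⟩ := hU
  obtain ⟨eV⟩ := hV
  obtain ⟨eUV⟩ := hUV
  have hUcard : Nat.card U = 6 := by
    rw [Nat.card_congr eU.toEquiv, DihedralGroup.nat_card]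
  have hZ : center U = ⊥ := by
    rw [← card_eq_one, Nat.card_congr (centerCongr eU).toEquiv,
      DihedralGroup.center_eq_bot_of_odd_ne_one (by decide) (by decide), card_bot]
  have : IsKleinFour V :=
    { card_four := (Nat.card_congr eV.toEquiv).trans IsKleinFour.card_four
      exponent_two := (Monoid.exponent_eq_of_mulEquiv eV).trans IsKleinFour.exponent_two }
  have hUVcard : Nat.card (U ⊓ V : Subgroup G) = 2 := by
    rw [Nat.card_congr eUV.toEquiv, Nat.card_congr Multiplicative.toAdd, Nat.card_zmod]
  obtain ⟨φ, t, hsys⟩ := exists_isHyperoctahedralSystem_of_sup_eq_top hG hUcard hZ hUVcard hgen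
  obtain ⟨f⟩ := hsys.nonempty_mulEquiv (by rw [hG, Nat.card_fin]; rfl)
  obtain ⟨g⟩ := isHyperoctahedralSystem_s4.nonempty_mulEquiv
    (by rw [card_perm_four_prod, Nat.card_fin]; rfl)
  exact ⟨f.symm.trans g⟩
end
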